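/- One-sided limits of the truncated single-layer integral of E_x: For every a ∈ ℝ, every t > 0 and every δ ∈ (0,t), lim_{x → a⁻} ∫_{t−δ}^{t} E_x(x − a, t − τ) dτ = 1/2 and lim_{x → a⁺} ∫_{t−δ}^{t} E_x(x − a, t − τ) dτ = −1/2. -/

import Mathlib

open MeasureTheory Real Filter Set Topology intervalIntegral

/-- The Wright function `W(z; -β, δ) = ∑ z^k/(k! Γ(δ - βk))`, with `1/Γ` the
entire reciprocal Gamma function (here `Real.Gamma` vanishes at nonpositive
integers, so division gives the correct value `0`). -/
noncomputable def wrightW (β δ z : ℝ) : ℝ :=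
  ∑' k : ℕ, z ^ k / (k.factorial * Real.Gamma (δ - β * k))

/-- Laplace convolution on `(0, ∞)`. -/
noncomputable def laplaceConv (f g : ℝ → ℝ) : ℝ → ℝ :=
  fun t => ∫ τ in (0:ℝ)..t, f τ * g (t - τ)

/-- Iterated Laplace convolution `h₀ ∗ h₁ ∗ ⋯ ∗ hₙ`. -/
noncomputable def iterConv : (n : ℕ) → (Fin (n + 1) → ℝ → ℝ) → ℝ → ℝ
  | 0, h => h 0
  | n + 1, h => laplaceConv (iterConv n (fun i => h i.castSucc)) (h (Fin.last (n + 1)))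

/-- `S^μ_m(t; -ℓ₁, …, -ℓ_m; -α₁, …, -α_m)` with the decomposition `μ₁ = μ`,
`μ_j = 0` for `j ≥ 2`: the Laplace convolution of
`h_j(t) = t^{μ_j - 1} W(-ℓ_j t^{-α_j}; -α_j, μ_j)`.  Indices run over
`Fin (n+1)`, i.e. the number of terms is `m = n + 1 ≥ 1`. -/
noncomputable def Sconv (n : ℕ) (μ : ℝ) (α ℓ : Fin (n + 1) → ℝ) : ℝ → ℝ :=
  iterConv n (fun j t =>
    t ^ ((if j = 0 then μ else 0) - 1) *
      wrightW (α j) (if j = 0 then μ else 0) (-(ℓ j) * t ^ (-(α j))))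

/-- `Γ^μ₁(x,t)`. -/
noncomputable def Gam1 (n : ℕ) (α lam : Fin (n + 1) → ℝ) (μ x t : ℝ) : ℝ :=
  (4 * Real.pi) ^ (-(1/2 : ℝ)) *
    ∫ p in Set.Ioi (0:ℝ),
      p ^ (-(1/2 : ℝ)) * Real.exp (-(|x| ^ 2) / (4 * p)) *
        Sconv n μ α (fun j => lam j * p) t

/-- The kernel `E(x,t) = Γ⁰₁(x,t)`. -/
noncomputable def kerE (n : ℕ) (α lam : Fin (n + 1) → ℝ) (x t : ℝ) : ℝ :=
  Gam1 n α lam 0 x t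

/-- `E_x`, the spatial derivative of `E`. -/
noncomputable def kerEx (n : ℕ) (α lam : Fin (n + 1) → ℝ) (x t : ℝ) : ℝ :=
  deriv (fun y => kerE n α lam y t) x

/-- `E_xx`, the second spatial derivative of `E`. -/
noncomputable def kerExx (n : ℕ) (α lam : Fin (n + 1) → ℝ) (x t : ℝ) : ℝ :=
  deriv (fun y => kerEx n α lam y t) x

/-- The kernel `Z(x,t) = ∑ₖ λₖ Γ^{1-αₖ}₁(x,t)`. -/
noncomputable def kerZ (n : ℕ) (α lam : Fin (n + 1) → ℝ) (x t : ℝ) : ℝ :=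
  ∑ k : Fin (n + 1), lam k * Gam1 n α lam (1 - α k) x t

/-- `Z_x`, the spatial derivative of `Z`. -/
noncomputable def kerZx (n : ℕ) (α lam : Fin (n + 1) → ℝ) (x t : ℝ) : ℝ :=
  deriv (fun y => kerZ n α lam y t) x

/-- `Z_xx`, the second spatial derivative of `Z`. -/
noncomputable def kerZxx (n : ℕ) (α lam : Fin (n + 1) → ℝ) (x t : ℝ) : ℝ :=
  deriv (fun y => kerZx n α lam y t) x

/-!
The kernel `E(y, s)` is the integral over `p > 0` of heat kernels in `y` at time `p`, with weights
`S⁰_m(s; -λp; -α)`. The spatial derivative of the heat kernel is `-sign y / 2` times a Lévy density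
in `p`, whose mass concentrates at `p = 0` as `y → 0`; so the truncated layer integral is
`-sign y / 2` times a Lévy average of `p ↦ ∫₀^δ S⁰_m(s; -λp; -α) ds`, and it suffices that this
function is bounded and tends to `1` as `p → 0`. This holds because `S⁰_m` is a convolution of
one-sided stable densities whose mass, equal to `1`, concentrates at `s = 0` as `p → 0`. The mass of
a stable density is found by writing the density as an integral along a ray on which the integrand
is absolutely integrable, computing the moments of order `-σ` for `0 < σ < 1` by Fubini's theorem,
and letting `σ → 0`.
-/

/-! ### Gamma integrals -/

theorem integrableOn_rpow_mul_exp_neg_mul {a b : ℝ} (ha : -1 < a) (hb : 0 < b) :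
    IntegrableOn (fun u : ℝ => u ^ a * rexp (-(b * u))) (Ioi 0) := by
  simpa only [Real.rpow_one, neg_mul] using
    integrableOn_rpow_mul_exp_neg_mul_rpow (p := 1) ha one_pos hb

theorem norm_cpow_mul_cexp_neg_mul (a r : ℂ) {u : ℝ} (hu : 0 < u) :
    ‖(u : ℂ) ^ a * Complex.exp (-(r * u))‖ = u ^ a.re * rexp (-(r.re * u)) := by
  rw [norm_mul, Complex.norm_cpow_eq_rpow_re_of_pos hu, Complex.norm_exp, Complex.neg_re,
    Complex.re_mul_ofReal]

theorem integrableOn_cpow_mul_cexp_neg_mul {a r : ℂ} (ha : -1 < a.re) (hr : 0 < r.re) :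
    IntegrableOn (fun u : ℝ => (u : ℂ) ^ a * Complex.exp (-(r * u))) (Ioi 0) := by
  refine (integrableOn_rpow_mul_exp_neg_mul ha hr).mono'
    (Measurable.aestronglyMeasurable (by fun_prop)) ?_
  filter_upwards [ae_restrict_mem measurableSet_Ioi] with u hu
  exact (norm_cpow_mul_cexp_neg_mul a r hu).le

theorem differentiableAt_integral_cpow_mul_cexp_neg_mul {a r : ℂ} (ha : -1 < a.re)
    (hr : 0 < r.re) :
    DifferentiableAt ℂ
      (fun w : ℂ => ∫ u : ℝ in Ioi 0, (u : ℂ) ^ a * Complex.exp (-(w * u))) r := by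
  have hnhds : {w : ℂ | r.re / 2 < w.re} ∈ 𝓝 r :=
    (isOpen_lt continuous_const Complex.continuous_re).mem_nhds (half_lt_self hr)
  refine (_root_.hasDerivAt_integral_of_dominated_loc_of_deriv_le (𝕜 := ℂ)
    (μ := volume.restrict (Ioi 0)) (F := fun w (u : ℝ) => (u : ℂ) ^ a * Complex.exp (-(w * u)))
    (F' := fun w (u : ℝ) => (u : ℂ) ^ a * (Complex.exp (-(w * u)) * (-u)))
    (bound := fun u => u ^ (a.re + 1) * rexp (-(r.re / 2 * u))) hnhds
    (Eventually.of_forall fun w => Measurable.aestronglyMeasurable (by fun_prop))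
    (integrableOn_cpow_mul_cexp_neg_mul ha hr)
    (Measurable.aestronglyMeasurable (by fun_prop)) ?_
    (integrableOn_rpow_mul_exp_neg_mul (by linarith) (by positivity)) ?_).2.differentiableAt
  · filter_upwards [ae_restrict_mem measurableSet_Ioi] with u (hu : 0 < u) w
      (hw : r.re / 2 < w.re)
    rw [← mul_assoc, norm_mul, norm_cpow_mul_cexp_neg_mul a w hu, norm_neg, Complex.norm_real,
      Real.norm_of_nonneg hu.le, mul_right_comm, ← Real.rpow_add_one hu.ne']
    gcongr
  · exact Eventually.of_forall fun u w _ =>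
      ((hasDerivAt_mul_const (u : ℂ)).fun_neg.cexp).const_mul _

/-- Both sides are holomorphic in `r` and agree for real `r`. -/
theorem integral_cpow_mul_cexp_neg_mul {a r : ℂ} (ha : 0 < a.re) (hr : 0 < r.re) :
    ∫ u : ℝ in Ioi 0, (u : ℂ) ^ (a - 1) * Complex.exp (-(r * u)) =
      (1 / r) ^ a * Complex.Gamma a := by
  have hopen : IsOpen {w : ℂ | 0 < w.re} := isOpen_lt continuous_const Complex.continuous_re
  have hleft : AnalyticOnNhd ℂ
      (fun w : ℂ => ∫ u : ℝ in Ioi 0, (u : ℂ) ^ (a - 1) * Complex.exp (-(w * u)))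
      {w : ℂ | 0 < w.re} :=
    DifferentiableOn.analyticOnNhd (fun w hw =>
      (differentiableAt_integral_cpow_mul_cexp_neg_mul (by simpa using ha)
        hw).differentiableWithinAt) hopen
  have hright : AnalyticOnNhd ℂ (fun w : ℂ => (1 / w) ^ a * Complex.Gamma a)
      {w : ℂ | 0 < w.re} := by
    refine DifferentiableOn.analyticOnNhd (fun w (hw : 0 < w.re) => ?_) hopen
    have hw0 : w ≠ 0 := fun h => by simp [h] at hw
    refine ((DifferentiableAt.cpow_const ?_ (Or.inl ?_)).mul_const _).differentiableWithinAt
    · exact (differentiableAt_const _).div differentiableAt_id hw0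
    · rw [one_div, Complex.inv_re]
      exact div_pos hw (Complex.normSq_pos.mpr hw0)
  have hreal : Tendsto ((↑) : ℝ → ℂ) (𝓝[≠] 1) (𝓝[≠] 1) :=
    Complex.continuous_ofReal.continuousWithinAt.tendsto_nhdsWithin
      fun x (hx : x ≠ 1) => by simpa using hx
  refine hleft.eqOn_of_preconnected_of_frequently_eq hright
    (convex_halfSpace_re_gt 0).isPreconnected (z₀ := 1) (by simp)
    (hreal.frequently (Eventually.frequently ?_)) hr
  filter_upwards [nhdsWithin_le_nhds (lt_mem_nhds one_pos)] with x hx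
  exact Complex.integral_cpow_mul_exp_neg_mul_Ioi ha hx

theorem integral_rpow_mul_cexp_neg_mul {a : ℝ} {r : ℂ} (ha : 0 < a) (hr : 0 < r.re) :
    ∫ u : ℝ in Ioi 0, ((u ^ (a - 1) : ℝ) : ℂ) * Complex.exp (-(r * u)) =
      (1 / r) ^ (a : ℂ) * Real.Gamma a := by
  rw [← Complex.Gamma_ofReal, ← integral_cpow_mul_cexp_neg_mul (by simpa using ha) hr]
  refine setIntegral_congr_fun measurableSet_Ioi fun u (hu : 0 < u) => ?_
  simp only [Complex.ofReal_cpow hu.le, Complex.ofReal_sub, Complex.ofReal_one]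

theorem integral_rpow_mul_cexp_neg_mul_rpow {a p : ℝ} {r : ℂ} (ha : 0 < a) (hp : 0 < p)
    (hr : 0 < r.re) :
    ∫ v : ℝ in Ioi 0, ((v ^ (a - 1) : ℝ) : ℂ) * Complex.exp (-(r * (v ^ p : ℝ))) =
      (1 / p : ℝ) * ((1 / r) ^ ((a / p : ℝ) : ℂ) * Real.Gamma (a / p)) := by
  rw [← integral_rpow_mul_cexp_neg_mul (by positivity) hr, ← integral_comp_rpow_Ioi_of_pos
    (g := fun w : ℝ => ((w ^ (a / p - 1) : ℝ) : ℂ) * Complex.exp (-(r * w))) hp,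
    ← MeasureTheory.integral_const_mul]
  refine setIntegral_congr_fun measurableSet_Ioi fun v (hv : 0 < v) => ?_
  have hpow : v ^ (a - 1) = 1 / p * (p * v ^ (p - 1) * (v ^ p) ^ (a / p - 1)) := by
    rw [← Real.rpow_mul hv.le, mul_assoc, ← Real.rpow_add hv]
    field_simp
    ring_nf
  simp only [Complex.real_smul, hpow]
  push_cast
  ring

theorem integrableOn_exp_neg_mul_add_mul_rpow {α b : ℝ} (hα : α ∈ Ioo 0 1) (hb : 0 < b)
    (z : ℝ) : IntegrableOn (fun u : ℝ => rexp (-(b * u) + z * u ^ α)) (Ioi 0) := by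
  refine integrable_of_isBigO_exp_neg (half_pos hb) ?_ (Asymptotics.IsBigO.of_bound 1 ?_)
  · exact (((continuous_const.mul continuous_id).neg.add
      (continuous_const.mul (Real.continuous_rpow_const hα.1.le))).rexp).continuousOn
  · have hgrow := (tendsto_rpow_atTop (sub_pos.mpr hα.2)).const_mul_atTop (half_pos hb)
    filter_upwards [hgrow.eventually_ge_atTop z, eventually_gt_atTop 0] with u hu hu0
    have hzu : z * u ^ α ≤ b / 2 * u := by
      calc z * u ^ α ≤ (b / 2 * u ^ (1 - α)) * u ^ α := by gcongr
        _ = b / 2 * u := by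
          rw [mul_assoc, ← Real.rpow_add hu0, sub_add_cancel, Real.rpow_one]
    simp only [Real.norm_eq_abs, Real.abs_exp, one_mul]
    exact Real.exp_le_exp.mpr (by linarith)

theorem rpow_mul_exp_neg_div_eq (a b : ℝ) {p : ℝ} (hp : 0 < p) :
    p ^ a * rexp (-(b / p)) =
      p ^ ((-1 : ℝ) - 1) * ((p ^ (-1 : ℝ)) ^ (-a - 1 - 1) * rexp (-(b * p ^ (-1 : ℝ)))) := by
  rw [← mul_assoc, ← Real.rpow_mul hp.le, ← Real.rpow_add hp, Real.rpow_neg_one, div_eq_mul_inv]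
  ring_nf

theorem integrableOn_rpow_mul_exp_neg_div {a b : ℝ} (ha : a < -1) (hb : 0 < b) :
    IntegrableOn (fun p : ℝ => p ^ a * rexp (-(b / p))) (Ioi 0) := by
  refine ((integrableOn_Ioi_comp_rpow_iff' (fun u : ℝ => u ^ (-a - 1 - 1) * rexp (-(b * u)))
    (p := -1) (by norm_num)).mpr
    (integrableOn_rpow_mul_exp_neg_mul (by linarith) hb)).congr_fun ?_ measurableSet_Ioi
  exact fun p hp => (rpow_mul_exp_neg_div_eq a b hp).symm

theorem integral_rpow_mul_exp_neg_div {a b : ℝ} (ha : a < -1) (hb : 0 < b) :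
    ∫ p : ℝ in Ioi 0, p ^ a * rexp (-(b / p)) =
      (1 / b) ^ (-a - 1) * Real.Gamma (-a - 1) := by
  rw [← Real.integral_rpow_mul_exp_neg_mul_Ioi (by linarith) hb,
    ← integral_comp_rpow_Ioi (fun u : ℝ => u ^ (-a - 1 - 1) * rexp (-(b * u)))
      (p := -1) (by norm_num)]
  refine setIntegral_congr_fun measurableSet_Ioi fun p hp => ?_
  simp only [rpow_mul_exp_neg_div_eq a b hp, abs_neg, abs_one, one_mul, smul_eq_mul]

theorem one_div_Gamma_neg {s : ℝ} (hs : -1 < s) :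
    1 / Real.Gamma (-s) = -(1 / π) * (Real.Gamma (1 + s) * Real.sin (π * s)) := by
  have hreflect := Real.Gamma_mul_Gamma_one_sub (-s)
  rw [sub_neg_eq_add] at hreflect
  have hpos : 0 < Real.Gamma (1 + s) := Real.Gamma_pos_of_pos (by linarith)
  rw [eq_div_of_mul_eq hpos.ne' hreflect, mul_neg, Real.sin_neg]
  rcases eq_or_ne (Real.sin (π * s)) 0 with hsin | hsin
  · simp [hsin]
  · field_simp

/-! ### One-sided stable densities -/

/-- The angle `φ` with `φ (1 + α) = π α`: along the ray of argument `-φ` both exponentials in the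
contour integral of the `α`-stable density decay, at the same rate `cos φ`. -/
noncomputable def stableAngle (α : ℝ) : ℝ := π * α / (1 + α)

/-- The unit complex number of argument `stableAngle α`; the contour of integration has the inverse
direction. -/
noncomputable def stableDir (α : ℝ) : ℂ := Complex.exp (stableAngle α * Complex.I)

/-- The integrand `exp (-t v / κ) exp (-κ v ^ α)`, with `κ = stableDir α`, of the contour integral
of the `α`-stable density. -/
noncomputable def stableKernel (α t v : ℝ) : ℂ :=
  Complex.exp (-((stableDir α)⁻¹ * (t * v : ℝ))) * Complex.exp (-(stableDir α * (v ^ α : ℝ)))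

/-- The density `t⁻¹ W(-t ^ (-α); -α, 0)` of the one-sided `α`-stable law, whose Laplace transform
is `exp (-s ^ α)`. -/
noncomputable def stableDensity (α t : ℝ) : ℝ := t⁻¹ * wrightW α 0 (-(t ^ (-α)))

section StableDensity

variable {α : ℝ}

theorem stableAngle_mem_Ioo (hα : α ∈ Ioo 0 1) : stableAngle α ∈ Ioo 0 (π / 2) := by
  have hden : 0 < 1 + α := by linarith [hα.1]
  refine ⟨div_pos (mul_pos pi_pos hα.1) hden, ?_⟩
  rw [stableAngle, div_lt_div_iff₀ hden two_pos]
  nlinarith [pi_pos, hα.2]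

theorem cos_stableAngle_pos (hα : α ∈ Ioo 0 1) : 0 < Real.cos (stableAngle α) :=
  Real.cos_pos_of_mem_Ioo
    ⟨by linarith [(stableAngle_mem_Ioo hα).1, pi_pos], (stableAngle_mem_Ioo hα).2⟩

theorem stableDir_ne_zero (α : ℝ) : stableDir α ≠ 0 := Complex.exp_ne_zero _

theorem norm_stableDir (α : ℝ) : ‖stableDir α‖ = 1 := Complex.norm_exp_ofReal_mul_I _

theorem re_stableDir (α : ℝ) : (stableDir α).re = Real.cos (stableAngle α) :=
  Complex.exp_ofReal_mul_I_re _

theorem re_inv_stableDir (α : ℝ) : (stableDir α)⁻¹.re = Real.cos (stableAngle α) := by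
  rw [Complex.inv_re, Complex.normSq_eq_norm_sq, norm_stableDir, re_stableDir, one_pow, div_one]

theorem arg_stableDir (hα : α ∈ Ioo 0 1) : (stableDir α).arg = stableAngle α := by
  obtain ⟨hpos, hlt⟩ := stableAngle_mem_Ioo hα
  rw [stableDir, Complex.exp_mul_I]
  exact Complex.arg_cos_add_sin_mul_I ⟨by linarith [pi_pos], by linarith [pi_pos]⟩

theorem im_stableDir_cpow (hα : α ∈ Ioo 0 1) (s : ℝ) :
    (stableDir α ^ (((1 + α) * s : ℝ) : ℂ)).im = Real.sin (π * (α * s)) := by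
  have hden : 1 + α ≠ 0 := by linarith [hα.1]
  rw [Complex.cpow_ofReal_im, norm_stableDir, Real.one_rpow, one_mul, arg_stableDir hα,
    stableAngle]
  congr 1
  field_simp

theorem inv_stableDir_cpow (hα : α ∈ Ioo 0 1) (s : ℝ) :
    (stableDir α)⁻¹ ^ (s : ℂ) = stableDir α ^ ((-s : ℝ) : ℂ) := by
  rw [Complex.inv_cpow, Complex.ofReal_neg, Complex.cpow_neg]
  rw [arg_stableDir hα]
  linarith [(stableAngle_mem_Ioo hα).2, pi_pos]

theorem hasSum_integral_cexp_neg_mul_mul_pow {r : ℂ} (hα : α ∈ Ioo 0 1) (hr : 0 < r.re) (w : ℂ) :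
    HasSum (fun k : ℕ => ∫ u : ℝ in Ioi 0,
        Complex.exp (-(r * u)) * ((w * (u ^ α : ℝ)) ^ k / k.factorial))
      (∫ u : ℝ in Ioi 0, Complex.exp (-(r * u)) * Complex.exp (w * (u ^ α : ℝ))) := by
  have hreal (x : ℝ) : HasSum (fun k : ℕ => x ^ k / k.factorial) (rexp x) := by
    rw [Real.exp_eq_exp_ℝ]
    exact NormedSpace.expSeries_div_hasSum_exp x
  have hcomplex (x : ℂ) : HasSum (fun k : ℕ => x ^ k / k.factorial) (Complex.exp x) := by
    rw [Complex.exp_eq_exp_ℂ]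
    exact NormedSpace.expSeries_div_hasSum_exp x
  have hbound (u : ℝ) := (hreal (‖w‖ * u ^ α)).mul_left (rexp (-(r.re * u)))
  refine hasSum_integral_of_dominated_convergence
    (fun k u => rexp (-(r.re * u)) * ((‖w‖ * u ^ α) ^ k / k.factorial))
    (fun k => Measurable.aestronglyMeasurable (by fun_prop)) (fun k => ?_)
    (Eventually.of_forall fun u => (hbound u).summable) ?_
    (Eventually.of_forall fun u => (hcomplex _).mul_left _)
  · filter_upwards [ae_restrict_mem measurableSet_Ioi] with u (hu : 0 < u)
    rw [norm_mul, Complex.norm_exp, Complex.neg_re, Complex.re_mul_ofReal, norm_div, norm_pow,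
      norm_mul, Complex.norm_real, Real.norm_of_nonneg (by positivity), Complex.norm_natCast]
  · simp only [(hbound _).tsum_eq, ← Real.exp_add]
    exact integrableOn_exp_neg_mul_add_mul_rpow hα hr _

theorem integral_cexp_neg_inv_stableDir_mul_pow (hα : α ∈ Ioo 0 1) (z : ℝ) (k : ℕ) :
    ∫ u : ℝ in Ioi 0, Complex.exp (-((stableDir α)⁻¹ * u)) *
        ((z * stableDir α * (u ^ α : ℝ)) ^ k / k.factorial) =
      (z ^ k / k.factorial * Real.Gamma (1 + α * k) : ℝ) *
        (stableDir α ^ (k : ℂ) * stableDir α ^ ((1 + α * k : ℝ) : ℂ)) := by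
  have hk : 0 < 1 + α * k := by nlinarith [hα.1, k.cast_nonneg (α := ℝ)]
  have hre : 0 < (stableDir α)⁻¹.re := (re_inv_stableDir α).symm ▸ cos_stableAngle_pos hα
  calc _ = ∫ u : ℝ in Ioi 0, (z ^ k / k.factorial * stableDir α ^ k) *
        (((u ^ (1 + α * k - 1) : ℝ) : ℂ) * Complex.exp (-((stableDir α)⁻¹ * u))) := by
        refine setIntegral_congr_fun measurableSet_Ioi fun u (hu : 0 < u) => ?_
        simp only [add_sub_cancel_left, Real.rpow_mul hu.le, Real.rpow_natCast]
        push_cast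
        ring
    _ = _ := by
        rw [MeasureTheory.integral_const_mul, integral_rpow_mul_cexp_neg_mul hk hre, one_div,
          inv_inv, Complex.cpow_natCast]
        push_cast
        ring

theorem hasSum_wrightW (hα : α ∈ Ioo 0 1) (z : ℝ) :
    HasSum (fun k : ℕ => z ^ k / (k.factorial * Real.Gamma (0 - α * k)))
      (-(1 / π) * ((stableDir α)⁻¹ * ∫ u : ℝ in Ioi 0,
        Complex.exp (-((stableDir α)⁻¹ * u)) *
          Complex.exp (z * stableDir α * (u ^ α : ℝ))).im) := by
  have hre : 0 < (stableDir α)⁻¹.re := (re_inv_stableDir α).symm ▸ cos_stableAngle_pos hα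
  refine ((Complex.hasSum_im ((hasSum_integral_cexp_neg_mul_mul_pow hα hre
    (z * stableDir α)).mul_left (stableDir α)⁻¹)).mul_left (-(1 / π))).congr_fun fun k => ?_
  have hphase : (stableDir α)⁻¹ * (stableDir α ^ (k : ℂ) * stableDir α ^ ((1 + α * k : ℝ) : ℂ)) =
      stableDir α ^ (((1 + α) * k : ℝ) : ℂ) := by
    rw [← Complex.cpow_neg_one, ← Complex.cpow_add _ _ (stableDir_ne_zero α),
      ← Complex.cpow_add _ _ (stableDir_ne_zero α)]
    push_cast
    ring_nf
  have hk : -1 < α * k := by nlinarith [hα.1, k.cast_nonneg (α := ℝ)]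
  rw [integral_cexp_neg_inv_stableDir_mul_pow hα, mul_left_comm, hphase, Complex.im_ofReal_mul,
    im_stableDir_cpow hα, zero_sub, div_mul_eq_div_mul_one_div, one_div_Gamma_neg hk]
  ring

theorem measurable_wrightW (hα : α ∈ Ioo 0 1) : Measurable (wrightW α 0) := by
  refine measurable_of_tendsto_metrizable (f := fun n z => ∑ k ∈ Finset.range n,
    z ^ k / (k.factorial * Real.Gamma (0 - α * k))) (fun n => by fun_prop) ?_
  exact tendsto_pi_nhds.mpr fun z => (hasSum_wrightW hα z).summable.hasSum.tendsto_sum_nat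

/-- The constant term of the Wright series is `1 / Γ(0) = 0`. -/
theorem exists_abs_wrightW_le_mul_abs (hα : α ∈ Ioo 0 1) :
    ∃ C, ∀ z, |z| ≤ 1 → |wrightW α 0 z| ≤ C * |z| := by
  have hsum := (hasSum_wrightW hα 1).summable.norm.hasSum
  refine ⟨∑' k : ℕ, ‖(1 : ℝ) ^ k / (k.factorial * Real.Gamma (0 - α * k))‖, fun z hz => ?_⟩
  rw [wrightW, ← Real.norm_eq_abs]
  refine tsum_of_norm_bounded (hsum.mul_right |z|) fun k => ?_
  rcases eq_or_ne k 0 with rfl | hk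
  · simp
  · rw [norm_div, norm_div, norm_pow, one_pow, norm_one, Real.norm_eq_abs, one_div_mul_eq_div]
    gcongr
    exact pow_le_of_le_one (abs_nonneg z) hz hk

theorem measurable_stableDensity (hα : α ∈ Ioo 0 1) : Measurable (stableDensity α) :=
  measurable_inv.mul ((measurable_wrightW hα).comp (measurable_id.pow_const (-α)).neg)

theorem measurable_uncurry_stableKernel (α : ℝ) :
    Measurable (Function.uncurry (stableKernel α)) := by
  unfold stableKernel Function.uncurry
  fun_prop

theorem norm_stableKernel (α t v : ℝ) :
    ‖stableKernel α t v‖ = rexp (-(Real.cos (stableAngle α) * v * t)) *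
      rexp (-Real.cos (stableAngle α) * v ^ α) := by
  rw [stableKernel, norm_mul, Complex.norm_exp, Complex.norm_exp, Complex.neg_re, Complex.neg_re,
    Complex.re_mul_ofReal, Complex.re_mul_ofReal, re_stableDir, re_inv_stableDir]
  ring_nf

theorem stableDensity_eq (hα : α ∈ Ioo 0 1) {t : ℝ} (ht : 0 < t) :
    stableDensity α t =
      -(1 / π) * ((stableDir α)⁻¹ * ∫ v : ℝ in Ioi 0, stableKernel α t v).im := by
  have hkernel : ∫ v : ℝ in Ioi 0, stableKernel α t v = ∫ v : ℝ in Ioi 0,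
      Complex.exp (-((stableDir α)⁻¹ * (t * v : ℝ))) *
        Complex.exp ((-(t ^ (-α)) : ℝ) * stableDir α * (((t * v) ^ α : ℝ) : ℂ)) := by
    refine setIntegral_congr_fun measurableSet_Ioi fun v (hv : 0 < v) => ?_
    have htα : ((t ^ α : ℝ) : ℂ) ≠ 0 := by exact_mod_cast (Real.rpow_pos_of_pos ht α).ne'
    simp only [stableKernel, Real.mul_rpow ht.le hv.le, Real.rpow_neg ht.le]
    push_cast at htα ⊢
    field_simp
  rw [hkernel, integral_comp_mul_left_Ioi (fun u : ℝ => Complex.exp (-((stableDir α)⁻¹ * u)) *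
    Complex.exp ((-(t ^ (-α)) : ℝ) * stableDir α * (u ^ α : ℝ))) 0 ht, mul_zero, stableDensity,
    wrightW, (hasSum_wrightW hα _).tsum_eq, mul_smul_comm, Complex.smul_im, smul_eq_mul]
  ring

theorem exists_abs_stableDensity_le (hα : α ∈ Ioo 0 1) :
    ∃ C, ∀ t, 0 < t → |stableDensity α t| ≤ C := by
  have hcos := cos_stableAngle_pos hα
  refine ⟨1 / π * ∫ v : ℝ in Ioi 0, v ^ (0 : ℝ) * rexp (-Real.cos (stableAngle α) * v ^ α),
    fun t ht => ?_⟩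
  rw [stableDensity_eq hα ht, abs_mul, abs_neg, abs_of_pos (by positivity)]
  refine mul_le_mul_of_nonneg_left ((Complex.abs_im_le_norm _).trans ?_) (by positivity)
  rw [norm_mul, norm_inv, norm_stableDir, inv_one, one_mul]
  refine norm_integral_le_of_norm_le
    (integrableOn_rpow_mul_exp_neg_mul_rpow (by norm_num) hα.1 hcos) ?_
  filter_upwards [ae_restrict_mem measurableSet_Ioi] with v (hv : 0 < v)
  rw [norm_stableKernel, Real.rpow_zero]
  gcongr
  exact Real.exp_le_one_iff.mpr (neg_nonpos.mpr (by positivity))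

theorem exists_abs_stableDensity_le_rpow (hα : α ∈ Ioo 0 1) :
    ∃ C, ∀ t, 1 ≤ t → |stableDensity α t| ≤ C * t ^ (-α - 1) := by
  obtain ⟨C, hC⟩ := exists_abs_wrightW_le_mul_abs hα
  refine ⟨C, fun t ht => ?_⟩
  have ht0 : 0 < t := one_pos.trans_le ht
  have habs : |-(t ^ (-α))| = t ^ (-α) := by rw [abs_neg, abs_of_pos (by positivity)]
  calc |stableDensity α t| = t⁻¹ * |wrightW α 0 (-(t ^ (-α)))| := by
        rw [stableDensity, abs_mul, abs_inv, abs_of_pos ht0]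
    _ ≤ t⁻¹ * (C * t ^ (-α)) := by
        gcongr
        refine (hC _ ?_).trans_eq (by rw [habs])
        exact habs.trans_le (Real.rpow_le_one_of_one_le_of_nonpos ht (by linarith [hα.1]))
    _ = C * t ^ (-α - 1) := by
        rw [Real.rpow_sub_one ht0.ne']
        ring

theorem integrableOn_rpow_mul_stableDensity {σ : ℝ} (hα : α ∈ Ioo 0 1) (hσ : σ ∈ Ico 0 1) :
    IntegrableOn (fun t => t ^ (-σ) * stableDensity α t) (Ioi 0) := by
  have hmeas : AEStronglyMeasurable (fun t => t ^ (-σ) * stableDensity α t) volume :=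
    ((measurable_id.pow_const (-σ)).mul (measurable_stableDensity hα)).aestronglyMeasurable
  rw [← Ioc_union_Ioi_eq_Ioi zero_le_one]
  refine IntegrableOn.union ?_ ?_
  · obtain ⟨C, hC⟩ := exists_abs_stableDensity_le hα
    have hint : IntegrableOn (fun t : ℝ => t ^ (-σ) * C) (Ioc 0 1) :=
      ((intervalIntegrable_iff_integrableOn_Ioc_of_le zero_le_one).mp
        (intervalIntegral.intervalIntegrable_rpow' (by linarith [hσ.2]))).mul_const C
    refine hint.mono' hmeas.restrict ?_
    filter_upwards [ae_restrict_mem measurableSet_Ioc] with t ht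
    have hpow := Real.rpow_nonneg ht.1.le (-σ)
    rw [norm_mul, Real.norm_of_nonneg hpow, Real.norm_eq_abs]
    gcongr
    exact hC t ht.1
  · obtain ⟨C, hC⟩ := exists_abs_stableDensity_le_rpow hα
    have hint := integrableOn_Ioi_rpow_of_lt (a := -α - 1) (by linarith [hα.1]) one_pos
    refine (hint.const_mul C).mono' hmeas.restrict ?_
    filter_upwards [ae_restrict_mem measurableSet_Ioi] with t (ht : 1 < t)
    rw [norm_mul, Real.norm_of_nonneg (Real.rpow_nonneg (one_pos.trans ht).le _)]
    exact (mul_le_of_le_one_left (abs_nonneg _)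
      (Real.rpow_le_one_of_one_le_of_nonpos ht.le (by linarith [hσ.1]))).trans (hC t ht.le)

theorem integrableOn_stableDensity (hα : α ∈ Ioo 0 1) : IntegrableOn (stableDensity α) (Ioi 0) := by
  simpa using integrableOn_rpow_mul_stableDensity hα (left_mem_Ico.mpr one_pos)

theorem integrable_rpow_mul_stableKernel {σ : ℝ} (hα : α ∈ Ioo 0 1) (hσ : σ ∈ Ioo 0 1) :
    Integrable (Function.uncurry fun t v : ℝ => ((t ^ (-σ) : ℝ) : ℂ) * stableKernel α t v)
      ((volume.restrict (Ioi 0)).prod (volume.restrict (Ioi 0))) := by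
  have hcos := cos_stableAngle_pos hα
  set c := Real.cos (stableAngle α)
  have hmeas : Measurable
      (Function.uncurry fun t v : ℝ => ((t ^ (-σ) : ℝ) : ℂ) * stableKernel α t v) :=
    (by fun_prop : Measurable fun q : ℝ × ℝ => ((q.1 ^ (-σ) : ℝ) : ℂ)).mul
      (measurable_uncurry_stableKernel α)
  have hnorm (v : ℝ) {t : ℝ} (ht : 0 < t) : ‖((t ^ (-σ) : ℝ) : ℂ) * stableKernel α t v‖ =
      t ^ (1 - σ - 1) * rexp (-(c * v * t)) * rexp (-c * v ^ α) := by
    rw [norm_mul, norm_stableKernel, Complex.norm_real,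
      Real.norm_of_nonneg (Real.rpow_nonneg ht.le _), sub_sub_cancel_left, mul_assoc (t ^ (-σ))]
  refine (integrable_prod_iff' hmeas.aestronglyMeasurable).mpr ⟨?_, ?_⟩
  · filter_upwards [ae_restrict_mem measurableSet_Ioi] with v (hv : 0 < v)
    refine ((integrableOn_rpow_mul_exp_neg_mul (a := 1 - σ - 1) (by linarith [hσ.2])
      (mul_pos hcos hv)).mul_const (rexp (-c * v ^ α))).mono'
        (hmeas.comp (measurable_id.prodMk measurable_const)).aestronglyMeasurable ?_
    filter_upwards [ae_restrict_mem measurableSet_Ioi] with t ht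
    exact (hnorm v ht).le
  · refine IntegrableOn.congr_fun ((integrableOn_rpow_mul_exp_neg_mul_rpow (s := σ - 1)
      (by linarith [hσ.1]) hα.1 hcos).const_mul ((1 / c) ^ (1 - σ) * Real.Gamma (1 - σ)))
        (fun v (hv : 0 < v) => ?_) measurableSet_Ioi
    have hintegral := setIntegral_congr_fun (μ := volume) measurableSet_Ioi
      fun t (ht : 0 < t) => hnorm v ht
    simp only [Function.uncurry_apply_pair, hintegral, MeasureTheory.integral_mul_const]
    rw [Real.integral_rpow_mul_exp_neg_mul_Ioi (by linarith [hσ.2]) (mul_pos hcos hv),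
      ← one_div_mul_one_div, Real.mul_rpow (by positivity) (by positivity), one_div v,
      Real.inv_rpow hv.le, ← Real.rpow_neg hv.le, neg_sub]
    ring

theorem mul_ofReal_cpow {z : ℂ} (hz : z ≠ 0) {x : ℝ} (hx : 0 < x) (a : ℂ) :
    (z * x) ^ a = z ^ a * (x : ℂ) ^ a := by
  have hx0 : (x : ℂ) ≠ 0 := by exact_mod_cast hx.ne'
  rw [Complex.cpow_def_of_ne_zero (mul_ne_zero hz hx0), Complex.log_mul_ofReal x hx z hz,
    Complex.ofReal_log hx.le, add_mul, Complex.exp_add, mul_comm,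
    ← Complex.cpow_def_of_ne_zero hx0, ← Complex.cpow_def_of_ne_zero hz]

theorem integral_rpow_mul_stableKernel {σ v : ℝ} (hα : α ∈ Ioo 0 1) (hσ : σ < 1) (hv : 0 < v) :
    ∫ t : ℝ in Ioi 0, ((t ^ (-σ) : ℝ) : ℂ) * stableKernel α t v =
      stableDir α ^ ((1 - σ : ℝ) : ℂ) * Real.Gamma (1 - σ) *
        (((v ^ (σ - 1) : ℝ) : ℂ) * Complex.exp (-(stableDir α * (v ^ α : ℝ)))) := by
  have hre : 0 < ((stableDir α)⁻¹ * v).re := by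
    rw [Complex.re_mul_ofReal, re_inv_stableDir]
    exact mul_pos (cos_stableAngle_pos hα) hv
  have hpow : (1 / ((stableDir α)⁻¹ * v)) ^ ((1 - σ : ℝ) : ℂ) =
      stableDir α ^ ((1 - σ : ℝ) : ℂ) * (v ^ (σ - 1) : ℝ) := by
    rw [one_div, mul_inv, inv_inv, ← Complex.ofReal_inv,
      mul_ofReal_cpow (stableDir_ne_zero α) (inv_pos.mpr hv), ← Complex.ofReal_cpow (by positivity),
      Real.inv_rpow hv.le, ← Real.rpow_neg hv.le, neg_sub]
  calc _ = ∫ t : ℝ in Ioi 0,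
        (((t ^ (1 - σ - 1) : ℝ) : ℂ) * Complex.exp (-((stableDir α)⁻¹ * v * t))) *
          Complex.exp (-(stableDir α * (v ^ α : ℝ))) := by
        congr 1 with t
        rw [stableKernel]
        push_cast
        ring_nf
    _ = _ := by
        rw [MeasureTheory.integral_mul_const,
          integral_rpow_mul_cexp_neg_mul (by linarith) hre, hpow]
        ring

theorem integral_integral_rpow_mul_stableKernel {σ : ℝ} (hα : α ∈ Ioo 0 1) (hσ : σ ∈ Ioo 0 1) :
    ∫ t : ℝ in Ioi 0, ∫ v : ℝ in Ioi 0, ((t ^ (-σ) : ℝ) : ℂ) * stableKernel α t v =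
      (Real.Gamma (1 - σ) * (1 / α) * Real.Gamma (σ / α) : ℝ) *
        (stableDir α ^ ((1 - σ : ℝ) : ℂ) * stableDir α ^ ((-(σ / α) : ℝ) : ℂ)) := by
  have hre : 0 < (stableDir α).re := (re_stableDir α).symm ▸ cos_stableAngle_pos hα
  rw [integral_integral_swap (integrable_rpow_mul_stableKernel hα hσ),
    setIntegral_congr_fun measurableSet_Ioi
      fun v hv => integral_rpow_mul_stableKernel hα hσ.2 hv,
    MeasureTheory.integral_const_mul, integral_rpow_mul_cexp_neg_mul_rpow hσ.1 hα.1 hre, one_div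
    (stableDir α), inv_stableDir_cpow hα]
  push_cast
  ring

theorem integral_rpow_mul_stableDensity {σ : ℝ} (hα : α ∈ Ioo 0 1) (hσ : σ ∈ Ioo 0 1) :
    ∫ t in Ioi 0, t ^ (-σ) * stableDensity α t =
      Real.Gamma (1 + σ / α) / Real.Gamma (1 + σ) := by
  have hα0 := hα.1
  have hσ0 := hσ.1
  have him : ∫ t in Ioi 0, t ^ (-σ) * stableDensity α t = -(1 / π) * ((stableDir α)⁻¹ *
      ∫ t : ℝ in Ioi 0, ∫ v : ℝ in Ioi 0, ((t ^ (-σ) : ℝ) : ℂ) * stableKernel α t v).im := by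
    have hcomm := Complex.imCLM.integral_comp_comm
      ((integrable_rpow_mul_stableKernel hα hσ).integral_prod_left.const_mul (stableDir α)⁻¹)
    simp only [Function.uncurry_apply_pair] at hcomm
    rw [← MeasureTheory.integral_const_mul, ← Complex.imCLM_apply, ← hcomm,
      ← MeasureTheory.integral_const_mul]
    refine setIntegral_congr_fun measurableSet_Ioi fun t ht => ?_
    simp only [Complex.imCLM_apply]
    rw [stableDensity_eq hα ht, MeasureTheory.integral_const_mul, mul_left_comm _ ((_ : ℝ) : ℂ),
      Complex.im_ofReal_mul]
    ring
  have hphase : (stableDir α)⁻¹ *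
      (stableDir α ^ ((1 - σ : ℝ) : ℂ) * stableDir α ^ ((-(σ / α) : ℝ) : ℂ)) =
      stableDir α ^ (((1 + α) * (-(σ / α)) : ℝ) : ℂ) := by
    have hexp : (1 + α) * (-(σ / α)) = -1 + ((1 - σ) + -(σ / α)) := by
      field_simp
      ring
    rw [← Complex.cpow_neg_one, ← Complex.cpow_add _ _ (stableDir_ne_zero α),
      ← Complex.cpow_add _ _ (stableDir_ne_zero α), hexp]
    push_cast
    rfl
  have hreflect := one_div_Gamma_neg (s := -σ) (by linarith [hσ.2])
  rw [neg_neg, ← sub_eq_add_neg] at hreflect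
  rw [him, integral_integral_rpow_mul_stableKernel hα hσ, mul_left_comm, hphase,
    Complex.im_ofReal_mul, im_stableDir_cpow hα, mul_neg, mul_div_cancel₀ _ hα0.ne']
  calc _ = 1 / α * Real.Gamma (σ / α) *
        (-(1 / π) * (Real.Gamma (1 - σ) * Real.sin (π * -σ))) := by ring
    _ = _ := by
        rw [← hreflect, add_comm 1, add_comm 1, Real.Gamma_add_one (by positivity),
          Real.Gamma_add_one hσ0.ne']
        field_simp

theorem tendsto_integral_rpow_neg_mul {g : ℝ → ℝ} {σ₀ : ℝ} (hσ₀ : 0 < σ₀)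
    (hint : IntegrableOn g (Ioi 0)) (hint' : IntegrableOn (fun t => t ^ (-σ₀) * g t) (Ioi 0)) :
    Tendsto (fun σ : ℝ => ∫ t in Ioi 0, t ^ (-σ) * g t) (𝓝[>] 0) (𝓝 (∫ t in Ioi 0, g t)) := by
  refine tendsto_integral_filter_of_dominated_convergence
    (fun t => ‖g t‖ + ‖t ^ (-σ₀) * g t‖) (Eventually.of_forall fun σ =>
      (measurable_id.pow_const (-σ)).aestronglyMeasurable.mul hint.aestronglyMeasurable) ?_
    (hint.norm.add hint'.norm) ?_
  · filter_upwards [Ioo_mem_nhdsGT hσ₀] with σ hσ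
    filter_upwards [ae_restrict_mem measurableSet_Ioi] with t (ht : 0 < t)
    have hpow := Real.rpow_pos_of_pos ht (-σ₀)
    rw [norm_mul, norm_mul, Real.norm_of_nonneg (Real.rpow_nonneg ht.le _),
      Real.norm_of_nonneg hpow.le, ← one_add_mul]
    gcongr
    rcases le_total 1 t with h | h
    · linarith [Real.rpow_le_one_of_one_le_of_nonpos h (neg_nonpos.mpr hσ.1.le)]
    · linarith [Real.rpow_le_rpow_of_exponent_ge ht h (neg_le_neg hσ.2.le)]
  · filter_upwards [ae_restrict_mem measurableSet_Ioi] with t (ht : 0 < t)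
    have hcont : Continuous fun σ : ℝ => t ^ (-σ) * g t :=
      (Continuous.rpow continuous_const continuous_neg fun _ => Or.inl ht.ne').mul_const _
    simpa using (hcont.tendsto 0).mono_left nhdsWithin_le_nhds

theorem tendsto_Gamma_one_add_div_Gamma_one_add (α : ℝ) :
    Tendsto (fun σ : ℝ => Real.Gamma (1 + σ / α) / Real.Gamma (1 + σ)) (𝓝 0) (𝓝 1) := by
  have hGamma : Tendsto Real.Gamma (𝓝 1) (𝓝 1) := by
    simpa using Real.hasDerivAt_Gamma_one.continuousAt.tendsto
  have hnum : Tendsto (fun σ : ℝ => 1 + σ / α) (𝓝 0) (𝓝 1) :=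
    Continuous.tendsto' (by fun_prop) _ _ (by simp)
  have hden : Tendsto (fun σ : ℝ => 1 + σ) (𝓝 0) (𝓝 1) :=
    Continuous.tendsto' (by fun_prop) _ _ (by simp)
  simpa [Function.comp_def, Pi.div_def] using (hGamma.comp hnum).div (hGamma.comp hden) one_ne_zero

theorem integral_stableDensity (hα : α ∈ Ioo 0 1) : ∫ t in Ioi 0, stableDensity α t = 1 := by
  refine tendsto_nhds_unique (tendsto_integral_rpow_neg_mul (σ₀ := 1 / 2) (by norm_num)
    (integrableOn_stableDensity hα) (integrableOn_rpow_mul_stableDensity hα (by norm_num)))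
    (((tendsto_Gamma_one_add_div_Gamma_one_add α).mono_left nhdsWithin_le_nhds).congr' ?_)
  filter_upwards [Ioo_mem_nhdsGT one_pos] with σ hσ
  exact (integral_rpow_mul_stableDensity hα hσ).symm

end StableDensity

/-! ### Laplace convolution -/

theorem laplaceConv_of_pos (f g : ℝ → ℝ) {t : ℝ} (ht : 0 < t) :
    laplaceConv f g t = ∫ τ in Ioo 0 t, f τ * g (t - τ) := by
  rw [laplaceConv, intervalIntegral.integral_of_le ht.le, integral_Ioc_eq_integral_Ioo]

theorem abs_laplaceConv_le_laplaceConv_abs (f g : ℝ → ℝ) {t : ℝ} (ht : 0 < t) :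
    |laplaceConv f g t| ≤ laplaceConv (fun s => |f s|) (fun s => |g s|) t := by
  simp only [laplaceConv_of_pos _ _ ht, ← abs_mul]
  exact abs_integral_le_integral_abs

theorem integrableOn_mul_comp_sub {f g : ℝ → ℝ} {B : ℝ} (t : ℝ) (hf : IntegrableOn f (Ioi 0))
    (hg : Measurable g) (hB : ∀ s, 0 < s → |g s| ≤ B) :
    IntegrableOn (fun τ => f τ * g (t - τ)) (Ioo 0 t) := by
  refine (hf.mono_set Ioo_subset_Ioi_self).mul_bdd (c := B)
    (hg.comp (measurable_const.sub measurable_id)).aestronglyMeasurable ?_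
  filter_upwards [ae_restrict_mem measurableSet_Ioo] with τ hτ
  exact hB _ (sub_pos.mpr hτ.2)

theorem abs_laplaceConv_le {f g : ℝ → ℝ} {B t : ℝ} (ht : 0 < t) (hf : IntegrableOn f (Ioi 0))
    (hB : ∀ s, 0 < s → |g s| ≤ B) :
    |laplaceConv f g t| ≤ B * ∫ τ in Ioi 0, |f τ| := by
  have hB0 : 0 ≤ B := (abs_nonneg _).trans (hB 1 one_pos)
  calc |laplaceConv f g t| ≤ ∫ τ in Ioo 0 t, B * |f τ| := by
        rw [laplaceConv_of_pos _ _ ht, ← Real.norm_eq_abs]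
        refine norm_integral_le_of_norm_le
          ((hf.mono_set Ioo_subset_Ioi_self).abs.const_mul B) ?_
        filter_upwards [ae_restrict_mem measurableSet_Ioo] with τ hτ
        rw [norm_mul, mul_comm]
        exact mul_le_mul_of_nonneg_right (hB _ (sub_pos.mpr hτ.2)) (norm_nonneg _)
    _ ≤ B * ∫ τ in Ioi 0, |f τ| := by
        rw [MeasureTheory.integral_const_mul]
        gcongr
        · exact Eventually.of_forall fun τ => abs_nonneg _
        · exact hf.abs
        · exact Ioo_subset_Ioi_self

theorem integrableOn_laplaceConv {f g : ℝ → ℝ} (hf : IntegrableOn f (Ioi 0))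
    (hg : IntegrableOn g (Ioi 0)) : IntegrableOn (laplaceConv f g) (Ioi 0) := by
  have hconv := integrable_posConvolution hf hg (ContinuousLinearMap.mul ℝ ℝ)
  rwa [posConvolution, integrable_indicator_iff measurableSet_Ioi] at hconv

theorem integral_laplaceConv {f g : ℝ → ℝ} (hf : IntegrableOn f (Ioi 0))
    (hg : IntegrableOn g (Ioi 0)) :
    ∫ t in Ioi 0, laplaceConv f g t = (∫ t in Ioi 0, f t) * ∫ t in Ioi 0, g t :=
  integral_posConvolution hf hg (ContinuousLinearMap.mul ℝ ℝ)

theorem integral_abs_laplaceConv_le {f g : ℝ → ℝ} (hf : IntegrableOn f (Ioi 0))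
    (hg : IntegrableOn g (Ioi 0)) :
    ∫ t in Ioi 0, |laplaceConv f g t| ≤ (∫ t in Ioi 0, |f t|) * ∫ t in Ioi 0, |g t| := by
  rw [← integral_laplaceConv hf.abs hg.abs]
  exact setIntegral_mono_on (integrableOn_laplaceConv hf hg).abs
    (integrableOn_laplaceConv hf.abs hg.abs) measurableSet_Ioi
    fun t ht => abs_laplaceConv_le_laplaceConv_abs f g ht

/-- If `δ < t`, then `δ / 2 < τ` or `δ / 2 < t - τ`. -/
theorem laplaceConv_le_add_laplaceConv_indicator {f g : ℝ → ℝ} {B δ t : ℝ} (hδ : 0 < δ)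
    (ht : δ < t) (hf0 : ∀ s, 0 ≤ f s) (hg0 : ∀ s, 0 ≤ g s) (hf : IntegrableOn f (Ioi 0))
    (hg : Measurable g) (hB : ∀ s, 0 < s → g s ≤ B) :
    laplaceConv f g t ≤ laplaceConv ((Ioi (δ / 2)).indicator f) g t +
      laplaceConv f ((Ioi (δ / 2)).indicator g) t := by
  have hB' (s : ℝ) (hs : 0 < s) : |g s| ≤ B := (abs_of_nonneg (hg0 s)).trans_le (hB s hs)
  have hint := integrableOn_mul_comp_sub t hf hg hB'
  have hint₁ := integrableOn_mul_comp_sub t (hf.indicator (measurableSet_Ioi (a := δ / 2))) hg hB'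
  have hint₂ := integrableOn_mul_comp_sub t hf (hg.indicator (measurableSet_Ioi (a := δ / 2)))
    fun s hs => (norm_indicator_le_norm_self g s).trans (hB' s hs)
  simp only [laplaceConv_of_pos _ _ (hδ.trans ht)]
  rw [← MeasureTheory.integral_add hint₁ hint₂]
  refine MeasureTheory.integral_mono hint (hint₁.add hint₂) fun τ => ?_
  rcases lt_or_ge (δ / 2) τ with hτ | hτ
  · rw [indicator_of_mem (mem_Ioi.mpr hτ)]
    exact le_add_of_nonneg_right (mul_nonneg (hf0 τ) (indicator_nonneg (fun s _ => hg0 s) _))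
  · have hsub : t - τ ∈ Ioi (δ / 2) := by rw [mem_Ioi]; linarith
    rw [indicator_of_mem hsub]
    exact le_add_of_nonneg_left (mul_nonneg (indicator_nonneg (fun s _ => hf0 s) _) (hg0 _))

theorem setIntegral_Ioi_eq_integral_indicator (h : ℝ → ℝ) {δ : ℝ} (hδ : 0 ≤ δ) :
    ∫ t in Ioi δ, h t = ∫ t in Ioi 0, (Ioi δ).indicator h t := by
  rw [setIntegral_indicator measurableSet_Ioi,
    inter_eq_self_of_subset_right (Ioi_subset_Ioi hδ)]

theorem laplaceConv_nonneg {f g : ℝ → ℝ} {t : ℝ} (ht : 0 < t) (hf : ∀ s, 0 ≤ f s)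
    (hg : ∀ s, 0 ≤ g s) : 0 ≤ laplaceConv f g t :=
  intervalIntegral.integral_nonneg ht.le fun τ _ => mul_nonneg (hf τ) (hg (t - τ))

theorem setIntegral_Ioi_laplaceConv_le {f g : ℝ → ℝ} {B δ : ℝ} (hδ : 0 < δ)
    (hf0 : ∀ s, 0 ≤ f s) (hg0 : ∀ s, 0 ≤ g s) (hf : IntegrableOn f (Ioi 0))
    (hg : IntegrableOn g (Ioi 0)) (hgm : Measurable g) (hB : ∀ s, 0 < s → g s ≤ B) :
    ∫ t in Ioi δ, laplaceConv f g t ≤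
      (∫ t in Ioi (δ / 2), f t) * (∫ t in Ioi 0, g t) +
        (∫ t in Ioi 0, f t) * ∫ t in Ioi (δ / 2), g t := by
  have hf' := hf.indicator (measurableSet_Ioi (a := δ / 2))
  have hg' := hg.indicator (measurableSet_Ioi (a := δ / 2))
  have hint := (integrableOn_laplaceConv hf' hg).add (integrableOn_laplaceConv hf hg')
  have hsubset : Ioi δ ⊆ Ioi 0 := Ioi_subset_Ioi hδ.le
  rw [setIntegral_Ioi_eq_integral_indicator f (half_pos hδ).le,
    setIntegral_Ioi_eq_integral_indicator g (half_pos hδ).le, ← integral_laplaceConv hf' hg,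
    ← integral_laplaceConv hf hg', ← MeasureTheory.integral_add
      (integrableOn_laplaceConv hf' hg) (integrableOn_laplaceConv hf hg')]
  refine (setIntegral_mono_on ((integrableOn_laplaceConv hf hg).mono_set hsubset)
    (hint.mono_set hsubset) measurableSet_Ioi fun t ht =>
      laplaceConv_le_add_laplaceConv_indicator hδ ht hf0 hg0 hf hgm hB).trans
    (setIntegral_mono_set hint ?_ (Eventually.of_forall hsubset))
  filter_upwards [ae_restrict_mem measurableSet_Ioi] with t ht
  exact add_nonneg (laplaceConv_nonneg ht (indicator_nonneg fun s _ => hf0 s) hg0)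
    (laplaceConv_nonneg ht hf0 (indicator_nonneg fun s _ => hg0 s))

theorem measurable_uncurry_laplaceConv {f g : ℝ → ℝ → ℝ} (hf : Measurable (Function.uncurry f))
    (hg : Measurable (Function.uncurry g)) :
    Measurable (Function.uncurry fun p => laplaceConv (f p) (g p)) := by
  have hprod : Measurable fun z : (ℝ × ℝ) × ℝ => f z.1.1 z.2 * g z.1.1 (z.1.2 - z.2) :=
    (hf.comp (f := fun z : (ℝ × ℝ) × ℝ => (z.1.1, z.2)) (by fun_prop)).mul
      (hg.comp (f := fun z : (ℝ × ℝ) × ℝ => (z.1.1, z.1.2 - z.2)) (by fun_prop))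
  have hpos : MeasurableSet {z : (ℝ × ℝ) × ℝ | z.2 ∈ Ioc 0 z.1.2} :=
    (measurableSet_lt measurable_const measurable_snd).inter
      (measurableSet_le measurable_snd (measurable_snd.comp measurable_fst))
  have hneg : MeasurableSet {z : (ℝ × ℝ) × ℝ | z.2 ∈ Ioc z.1.2 0} :=
    (measurableSet_lt (measurable_snd.comp measurable_fst) measurable_snd).inter
      (measurableSet_le measurable_snd measurable_const)
  have hintPos := (hprod.indicator hpos).stronglyMeasurable.integral_prod_right' (ν := volume)
  have hintNeg := (hprod.indicator hneg).stronglyMeasurable.integral_prod_right' (ν := volume)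
  convert (hintPos.sub hintNeg).measurable using 1
  ext ⟨p, t⟩
  simp only [Function.uncurry, laplaceConv, intervalIntegral, Pi.sub_apply]
  rw [← MeasureTheory.integral_indicator measurableSet_Ioc,
    ← MeasureTheory.integral_indicator measurableSet_Ioc]
  rfl

/-! ### Concentrating families -/

/-- A family of kernels on the half-line that concentrates at the origin as its parameter `p`
decreases to zero: a (not necessarily nonnegative) approximate identity, indexed by `p > 0`. The
bound on the supremum, with an exponent `-β < -1 / 2`, controls the kernels for large `p`. Values
at `p ≤ 0` and at `t ≤ 0` are irrelevant, up to joint measurability. -/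
structure IsConcentratingFamily (f : ℝ → ℝ → ℝ) : Prop where
  measurable : Measurable (Function.uncurry f)
  exists_abs_le : ∃ C β : ℝ, 1 / 2 < β ∧ ∀ p t, 0 < p → 0 < t → |f p t| ≤ C * p ^ (-β)
  integrableOn : ∀ p, 0 < p → IntegrableOn (f p) (Ioi 0)
  exists_integral_abs_le : ∃ C, ∀ p, 0 < p → ∫ t in Ioi 0, |f p t| ≤ C
  integral_eq_one : ∀ p, 0 < p → ∫ t in Ioi 0, f p t = 1
  tendsto_tail : ∀ δ, 0 < δ → Tendsto (fun p => ∫ t in Ioi δ, |f p t|) (𝓝[>] 0) (𝓝 0)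

namespace IsConcentratingFamily

variable {f g : ℝ → ℝ → ℝ}

theorem congr (hf : IsConcentratingFamily f) (hg : Measurable (Function.uncurry g))
    (hfg : ∀ p, 0 < p → EqOn (f p) (g p) (Ioi 0)) : IsConcentratingFamily g where
  measurable := hg
  exists_abs_le := by
    obtain ⟨C, β, hβ, hC⟩ := hf.exists_abs_le
    exact ⟨C, β, hβ, fun p t hp ht => hfg p hp ht ▸ hC p t hp ht⟩
  integrableOn p hp := (hf.integrableOn p hp).congr_fun (hfg p hp) measurableSet_Ioi
  exists_integral_abs_le := by
    obtain ⟨C, hC⟩ := hf.exists_integral_abs_le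
    refine ⟨C, fun p hp => le_of_eq_of_le ?_ (hC p hp)⟩
    exact setIntegral_congr_fun measurableSet_Ioi fun t ht => congrArg abs (hfg p hp ht).symm
  integral_eq_one p hp :=
    (setIntegral_congr_fun measurableSet_Ioi (hfg p hp).symm).trans (hf.integral_eq_one p hp)
  tendsto_tail δ hδ := by
    refine (hf.tendsto_tail δ hδ).congr' ?_
    filter_upwards [self_mem_nhdsWithin] with p hp
    exact setIntegral_congr_fun measurableSet_Ioi fun t ht =>
      congrArg abs (hfg p hp (hδ.trans ht))

theorem tendsto_tail_laplaceConv (hf : IsConcentratingFamily f) (hg : IsConcentratingFamily g)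
    {δ : ℝ} (hδ : 0 < δ) :
    Tendsto (fun p => ∫ t in Ioi δ, |laplaceConv (f p) (g p) t|) (𝓝[>] 0) (𝓝 0) := by
  obtain ⟨Cf, hCf⟩ := hf.exists_integral_abs_le
  obtain ⟨Cg, hCg⟩ := hg.exists_integral_abs_le
  obtain ⟨B, β, -, hB⟩ := hg.exists_abs_le
  have hlim : Tendsto (fun p => (∫ t in Ioi (δ / 2), |f p t|) * Cg +
      Cf * ∫ t in Ioi (δ / 2), |g p t|) (𝓝[>] 0) (𝓝 0) := by
    simpa using ((hf.tendsto_tail _ (half_pos hδ)).mul_const Cg).add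
      ((hg.tendsto_tail _ (half_pos hδ)).const_mul Cf)
  have habs (h : ℝ → ℝ) (s : Set ℝ) : 0 ≤ ∫ t in s, |h t| := integral_nonneg fun _ => abs_nonneg _
  refine squeeze_zero' (Eventually.of_forall fun p => habs _ _) ?_ hlim
  filter_upwards [self_mem_nhdsWithin] with p (hp : 0 < p)
  have hfp := hf.integrableOn p hp
  have hgp := hg.integrableOn p hp
  have hgm : Measurable (g p) := hg.measurable.comp measurable_prodMk_left
  have hsubset : Ioi δ ⊆ Ioi 0 := Ioi_subset_Ioi hδ.le
  calc ∫ t in Ioi δ, |laplaceConv (f p) (g p) t|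
      ≤ ∫ t in Ioi δ, laplaceConv (fun s => |f p s|) (fun s => |g p s|) t :=
        setIntegral_mono_on ((integrableOn_laplaceConv hfp hgp).mono_set hsubset).abs
          ((integrableOn_laplaceConv hfp.abs hgp.abs).mono_set hsubset) measurableSet_Ioi
          fun t ht => abs_laplaceConv_le_laplaceConv_abs _ _ (hδ.trans ht)
    _ ≤ (∫ t in Ioi (δ / 2), |f p t|) * (∫ t in Ioi 0, |g p t|) +
          (∫ t in Ioi 0, |f p t|) * ∫ t in Ioi (δ / 2), |g p t| :=
        setIntegral_Ioi_laplaceConv_le hδ (fun _ => abs_nonneg _) (fun _ => abs_nonneg _) hfp.abs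
          hgp.abs hgm.abs fun s hs => hB p s hp hs
    _ ≤ (∫ t in Ioi (δ / 2), |f p t|) * Cg + Cf * ∫ t in Ioi (δ / 2), |g p t| := by
        gcongr
        exacts [hCg p hp, hCf p hp]

theorem laplaceConv (hf : IsConcentratingFamily f) (hg : IsConcentratingFamily g) :
    IsConcentratingFamily fun p => laplaceConv (f p) (g p) where
  measurable := measurable_uncurry_laplaceConv hf.measurable hg.measurable
  exists_abs_le := by
    obtain ⟨C, hC⟩ := hf.exists_integral_abs_le
    obtain ⟨B, β, hβ, hB⟩ := hg.exists_abs_le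
    refine ⟨B * C, β, hβ, fun p t hp ht => ?_⟩
    have hBp : 0 ≤ B * p ^ (-β) := (abs_nonneg _).trans (hB p t hp ht)
    calc |_root_.laplaceConv (f p) (g p) t| ≤ B * p ^ (-β) * ∫ τ in Ioi 0, |f p τ| :=
          abs_laplaceConv_le ht (hf.integrableOn p hp) fun s hs => hB p s hp hs
      _ ≤ B * p ^ (-β) * C := by gcongr; exact hC p hp
      _ = B * C * p ^ (-β) := by ring
  integrableOn p hp := integrableOn_laplaceConv (hf.integrableOn p hp) (hg.integrableOn p hp)
  exists_integral_abs_le := by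
    obtain ⟨Cf, hCf⟩ := hf.exists_integral_abs_le
    obtain ⟨Cg, hCg⟩ := hg.exists_integral_abs_le
    refine ⟨Cf * Cg, fun p hp => (integral_abs_laplaceConv_le (hf.integrableOn p hp)
      (hg.integrableOn p hp)).trans ?_⟩
    have hf0 : 0 ≤ ∫ t in Ioi 0, |f p t| := integral_nonneg fun _ => abs_nonneg _
    exact mul_le_mul (hCf p hp) (hCg p hp) (integral_nonneg fun _ => abs_nonneg _)
      (hf0.trans (hCf p hp))
  integral_eq_one p hp := by
    rw [integral_laplaceConv (hf.integrableOn p hp) (hg.integrableOn p hp),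
      hf.integral_eq_one p hp, hg.integral_eq_one p hp, one_mul]
  tendsto_tail _ hδ := hf.tendsto_tail_laplaceConv hg hδ

theorem iterConv : ∀ (n : ℕ) {H : Fin (n + 1) → ℝ → ℝ → ℝ},
    (∀ j, IsConcentratingFamily (H j)) → IsConcentratingFamily fun p => iterConv n fun j => H j p
  | 0, _, hH => hH 0
  | n + 1, _, hH => (iterConv n fun i => hH i.castSucc).laplaceConv (hH (Fin.last (n + 1)))

end IsConcentratingFamily

theorem setIntegral_Ioi_mul_comp_mul_left (φ : ℝ → ℝ) {c : ℝ} (hc : 0 < c) (δ : ℝ) :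
    ∫ t in Ioi δ, c * φ (c * t) = ∫ t in Ioi (c * δ), φ t := by
  rw [MeasureTheory.integral_const_mul, integral_comp_mul_left_Ioi φ δ hc, smul_eq_mul,
    mul_inv_cancel_left₀ hc.ne']

theorem tendsto_mul_rpow_neg_mul_nhdsGT_zero {b β δ : ℝ} (hb : 0 < b) (hβ : 0 < β) (hδ : 0 < δ) :
    Tendsto (fun p : ℝ => b * p ^ (-β) * δ) (𝓝[>] 0) atTop :=
  ((tendsto_rpow_neg_nhdsGT_zero (neg_neg_of_pos hβ)).const_mul_atTop hb).atTop_mul_const hδ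

theorem isConcentratingFamily_dilation {k : ℝ → ℝ} {b β K : ℝ} (hb : 0 < b) (hβ : 1 / 2 < β)
    (hkm : Measurable k) (hkb : ∀ t, 0 < t → |k t| ≤ K) (hki : IntegrableOn k (Ioi 0))
    (hk1 : ∫ t in Ioi 0, k t = 1) :
    IsConcentratingFamily fun p t => b * p ^ (-β) * k (b * p ^ (-β) * t) := by
  have hc (p : ℝ) (hp : 0 < p) : 0 < b * p ^ (-β) := mul_pos hb (Real.rpow_pos_of_pos hp _)
  have habs (p δ : ℝ) (hp : 0 < p) :
      ∫ t in Ioi δ, |b * p ^ (-β) * k (b * p ^ (-β) * t)| =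
        ∫ t in Ioi (b * p ^ (-β) * δ), |k t| := by
    simp only [abs_mul, abs_of_pos (hc p hp)]
    rw [setIntegral_Ioi_mul_comp_mul_left (fun t => |k t|) (hc p hp)]
  have hscale : Measurable fun z : ℝ × ℝ => b * z.1 ^ (-β) :=
    measurable_const.mul (measurable_fst.pow_const _)
  refine ⟨hscale.mul (hkm.comp (hscale.mul measurable_snd)), ⟨b * K, β, hβ, fun p t hp ht => ?_⟩,
    fun p hp => ?_, ⟨∫ t in Ioi 0, |k t|, fun p hp => ?_⟩, fun p hp => ?_, fun δ hδ => ?_⟩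
  · calc |b * p ^ (-β) * k (b * p ^ (-β) * t)| = b * p ^ (-β) * |k (b * p ^ (-β) * t)| := by
          rw [abs_mul, abs_of_pos (hc p hp)]
      _ ≤ b * p ^ (-β) * K :=
          mul_le_mul_of_nonneg_left (hkb _ (mul_pos (hc p hp) ht)) (hc p hp).le
      _ = b * K * p ^ (-β) := by ring
  · refine ((integrableOn_Ioi_comp_mul_left_iff k 0 (hc p hp)).mpr ?_).const_mul _
    rwa [mul_zero]
  · rw [habs p 0 hp, mul_zero]
  · rw [setIntegral_Ioi_mul_comp_mul_left k (hc p hp), mul_zero, hk1]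
  · have htail := tendsto_integral_Ioi_zero (f := fun t => |k t|) (μ := volume)
      (tendsto_mul_rpow_neg_mul_nhdsGT_zero hb (one_half_pos.trans hβ) hδ)
    refine htail.congr' ?_
    filter_upwards [self_mem_nhdsWithin] with p hp
    exact (habs p δ hp).symm

theorem dilation_stableDensity {α b t : ℝ} (hb : 0 < b) (ht : 0 < t) :
    b * stableDensity α (b * t) = t⁻¹ * wrightW α 0 (-(b ^ (-α) * t ^ (-α))) := by
  rw [stableDensity, Real.mul_rpow hb.le ht.le, mul_inv, ← mul_assoc, ← mul_assoc,
    mul_inv_cancel₀ hb.ne', one_mul]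

theorem isConcentratingFamily_wrightW {α l : ℝ} (hα : α ∈ Ioo 0 1) (hl : 0 < l) :
    IsConcentratingFamily
      fun p t => t ^ ((0 : ℝ) - 1) * wrightW α 0 (-(l * p) * t ^ (-α)) := by
  obtain ⟨K, hK⟩ := exists_abs_stableDensity_le hα
  have hβ : 1 / 2 < α⁻¹ := by
    rw [one_div]
    exact inv_strictAnti₀ hα.1 (hα.2.trans one_lt_two)
  have hdilation := isConcentratingFamily_dilation (b := l ^ (-α⁻¹)) (Real.rpow_pos_of_pos hl _)
    hβ (measurable_stableDensity hα) hK (integrableOn_stableDensity hα)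
    (integral_stableDensity hα)
  refine hdilation.congr ?_ fun p hp t ht => ?_
  · exact (measurable_snd.pow_const _).mul ((measurable_wrightW hα).comp
      ((measurable_const.mul measurable_fst).neg.mul (measurable_snd.pow_const _)))
  · have hlp : 0 < l * p := mul_pos hl hp
    have hpow : ((l * p) ^ (-α⁻¹)) ^ (-α) = l * p := by
      rw [← Real.rpow_mul hlp.le, neg_mul_neg, inv_mul_cancel₀ hα.1.ne', Real.rpow_one]
    beta_reduce
    rw [← Real.mul_rpow hl.le hp.le, dilation_stableDensity (Real.rpow_pos_of_pos hlp _) ht, hpow,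
      zero_sub, Real.rpow_neg_one, neg_mul]

theorem isConcentratingFamily_Sconv {m : ℕ} {α lam : Fin (m + 1) → ℝ}
    (hα : ∀ j, α j ∈ Ioo 0 1) (hlam : ∀ j, 0 < lam j) :
    IsConcentratingFamily fun p => Sconv m 0 α fun j => lam j * p := by
  simpa only [Sconv, ite_self] using
    IsConcentratingFamily.iterConv m fun j => isConcentratingFamily_wrightW (hα j) (hlam j)

/-! ### Gaussian subordination -/

/-- The density at `p` of the first passage time at level `|y|` of the diffusion with heat kernel
`(4 * π * p) ^ (-1 / 2) * exp (-y ^ 2 / (4 * p))`, that is, a rescaled Lévy density. The spatial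
derivative of that heat kernel is `-(sign y / 2) * levyDensity y p`. -/
noncomputable def levyDensity (y p : ℝ) : ℝ :=
  |y| / (2 * √π) * (p ^ (-(3 / 2) : ℝ) * rexp (-(y ^ 2 / 4 / p)))

theorem levyDensity_nonneg (y : ℝ) {p : ℝ} (hp : 0 ≤ p) : 0 ≤ levyDensity y p := by
  unfold levyDensity
  positivity

theorem measurable_levyDensity (y : ℝ) : Measurable (levyDensity y) :=
  ((measurable_id.pow_const _).mul (by fun_prop)).const_mul _

theorem levyDensity_le_mul {y z p c : ℝ} (hp : 0 ≤ p) (hyz : |y| ≤ |z|) (hzy : |z| ≤ c * |y|) :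
    levyDensity z p ≤ c * levyDensity y p := by
  calc levyDensity z p
      ≤ c * |y| / (2 * √π) * (p ^ (-(3 / 2) : ℝ) * rexp (-(y ^ 2 / 4 / p))) := by
        have hcy : 0 ≤ c * |y| := (abs_nonneg z).trans hzy
        have hsq : y ^ 2 ≤ z ^ 2 := sq_le_sq.mpr hyz
        unfold levyDensity
        gcongr
    _ = c * levyDensity y p := by rw [levyDensity]; ring

theorem levyDensity_mul_rpow (y β : ℝ) {p : ℝ} (hp : 0 < p) :
    levyDensity y p * p ^ (-β) =
      |y| / (2 * √π) * (p ^ (-(3 / 2) - β) * rexp (-(y ^ 2 / 4 / p))) := by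
  rw [levyDensity, sub_eq_add_neg, Real.rpow_add hp]
  ring

theorem integrableOn_levyDensity_mul_rpow {y β : ℝ} (hy : y ≠ 0) (hβ : -(1 / 2) < β) :
    IntegrableOn (fun p => levyDensity y p * p ^ (-β)) (Ioi 0) :=
  IntegrableOn.congr_fun ((integrableOn_rpow_mul_exp_neg_div (by linarith)
    (by positivity)).const_mul _) (fun _ hp => (levyDensity_mul_rpow y β hp).symm)
    measurableSet_Ioi

theorem integrableOn_levyDensity {y : ℝ} (hy : y ≠ 0) : IntegrableOn (levyDensity y) (Ioi 0) := by
  simpa using integrableOn_levyDensity_mul_rpow hy (β := 0) (by norm_num)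

theorem integral_levyDensity {y : ℝ} (hy : y ≠ 0) : ∫ p in Ioi 0, levyDensity y p = 1 := by
  have hy' : |y| ≠ 0 := abs_ne_zero.mpr hy
  have hexp : (-(-(3 / 2)) - 1 : ℝ) = 1 / 2 := by norm_num
  have hsqrt : (1 / (y ^ 2 / 4)) ^ (1 / 2 : ℝ) = 2 / |y| := by
    have hsq : 1 / (y ^ 2 / 4) = (2 / y) ^ 2 := by ring
    rw [hsq, ← Real.sqrt_eq_rpow, Real.sqrt_sq_eq_abs, abs_div, abs_two]
  simp only [levyDensity]
  rw [MeasureTheory.integral_const_mul, integral_rpow_mul_exp_neg_div (by norm_num) (by positivity),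
    hexp, Real.Gamma_one_half_eq, hsqrt]
  field_simp

theorem sq_mul_levyDensity_sq_mul {y q : ℝ} (hy : y ≠ 0) (hq : 0 < q) :
    y ^ 2 * levyDensity y (y ^ 2 * q) = levyDensity 1 q := by
  have hy' : 0 < |y| := abs_pos.mpr hy
  have hpow : (|y| ^ 2) ^ (-(3 / 2) : ℝ) = (|y| ^ 3)⁻¹ := by
    rw [← Real.rpow_natCast, ← Real.rpow_mul hy'.le, ← Real.rpow_natCast, ← Real.rpow_neg hy'.le]
    norm_num
  have hexp : y ^ 2 / 4 / (y ^ 2 * q) = 1 ^ 2 / 4 / q := by field_simp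
  rw [levyDensity, levyDensity, hexp, ← sq_abs y, Real.mul_rpow (sq_nonneg _) hq.le, hpow, abs_one]
  field_simp

theorem integral_levyDensity_mul (F : ℝ → ℝ) {y : ℝ} (hy : y ≠ 0) :
    ∫ p in Ioi 0, levyDensity y p * F p = ∫ q in Ioi 0, levyDensity 1 q * F (y ^ 2 * q) := by
  have hy2 : 0 < y ^ 2 := by positivity
  rw [← mul_zero (y ^ 2), ← setIntegral_Ioi_mul_comp_mul_left _ hy2, mul_zero]
  refine setIntegral_congr_fun measurableSet_Ioi fun q hq => ?_
  rw [← mul_assoc, sq_mul_levyDensity_sq_mul hy hq]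

theorem tendsto_integral_levyDensity_mul {F : ℝ → ℝ} {C L : ℝ} (hF : Measurable F)
    (hC : ∀ p, 0 < p → |F p| ≤ C) (hL : Tendsto F (𝓝[>] 0) (𝓝 L)) :
    Tendsto (fun y => ∫ p in Ioi 0, levyDensity y p * F p) (𝓝[≠] 0) (𝓝 L) := by
  have hint := integrableOn_levyDensity one_ne_zero
  have hlim : Tendsto (fun y => ∫ q in Ioi 0, levyDensity 1 q * F (y ^ 2 * q)) (𝓝[≠] 0)
      (𝓝 (∫ q in Ioi 0, levyDensity 1 q * L)) := by
    refine tendsto_integral_filter_of_dominated_convergence (fun q => levyDensity 1 q * C)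
      (Eventually.of_forall fun y => ((measurable_levyDensity 1).mul
        (hF.comp (measurable_const_mul _))).aestronglyMeasurable) ?_ (hint.mul_const C) ?_
    · filter_upwards [self_mem_nhdsWithin] with y (hy : y ≠ 0)
      filter_upwards [ae_restrict_mem measurableSet_Ioi] with q (hq : 0 < q)
      rw [norm_mul, Real.norm_of_nonneg (levyDensity_nonneg 1 hq.le)]
      exact mul_le_mul_of_nonneg_left (hC _ (by positivity)) (levyDensity_nonneg 1 hq.le)
    · filter_upwards [ae_restrict_mem measurableSet_Ioi] with q (hq : 0 < q)
      refine (hL.comp (tendsto_nhdsWithin_iff.mpr ⟨?_, ?_⟩)).const_mul _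
      · exact (Continuous.tendsto' (by fun_prop) 0 0 (by simp)).mono_left nhdsWithin_le_nhds
      · filter_upwards [self_mem_nhdsWithin] with y (hy : y ≠ 0)
        exact mem_Ioi.mpr (by positivity)
  rw [MeasureTheory.integral_mul_const, integral_levyDensity one_ne_zero, one_mul] at hlim
  refine hlim.congr' ?_
  filter_upwards [self_mem_nhdsWithin] with y hy
  exact (integral_levyDensity_mul F hy).symm

/-- The superposition over `p > 0` of the heat kernels
`(4 * π * p) ^ (-1 / 2) * exp (-y ^ 2 / (4 * p))` with weights `f p s`. For
`f p s = S⁰_m(s; -λp; -α)` it is the kernel `E(y, s)`, and it is written in the same form as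
`Gam1` to make the two definitionally equal. -/
noncomputable def heatSubordination (f : ℝ → ℝ → ℝ) (y s : ℝ) : ℝ :=
  (4 * π) ^ (-(1 / 2 : ℝ)) *
    ∫ p in Ioi 0, p ^ (-(1 / 2 : ℝ)) * rexp (-(|y| ^ 2) / (4 * p)) * f p s

theorem kerE_eq_heatSubordination (m : ℕ) (α lam : Fin (m + 1) → ℝ) :
    kerE m α lam = heatSubordination fun p => Sconv m 0 α fun j => lam j * p :=
  rfl

theorem hasDerivAt_rpow_mul_exp_neg_sq_div {p : ℝ} (hp : 0 < p) (y : ℝ) :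
    HasDerivAt (fun y : ℝ => p ^ (-(1 / 2 : ℝ)) * rexp (-(|y| ^ 2) / (4 * p)))
      (-(√π * SignType.sign y * levyDensity y p)) y := by
  simp only [sq_abs]
  have hquad : HasDerivAt (fun y : ℝ => -y ^ 2 / (4 * p)) (-(2 * y) / (4 * p)) y := by
    simpa using (hasDerivAt_pow 2 y).neg.div_const (4 * p)
  have hpow : p ^ (-(3 / 2) : ℝ) = p ^ (-(1 / 2) : ℝ) * p⁻¹ := by
    rw [← Real.rpow_neg_one, ← Real.rpow_add hp]
    norm_num
  have hexp : -y ^ 2 / (4 * p) = -(y ^ 2 / 4 / p) := by field_simp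
  have hpi : √π ≠ 0 := (Real.sqrt_pos.mpr Real.pi_pos).ne'
  refine (hquad.exp.const_mul _).congr_deriv ?_
  calc p ^ (-(1 / 2 : ℝ)) * (rexp (-y ^ 2 / (4 * p)) * (-(2 * y) / (4 * p)))
      = -(y / 2 * (p ^ (-(1 / 2) : ℝ) * p⁻¹ * rexp (-(y ^ 2 / 4 / p)))) := by
        rw [hexp]
        ring
    _ = -(SignType.sign y * |y| / 2 * (p ^ (-(3 / 2) : ℝ) * rexp (-(y ^ 2 / 4 / p)))) := by
        rw [sign_mul_abs, hpow]
    _ = -(√π * SignType.sign y * levyDensity y p) := by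
        rw [levyDensity]
        field_simp

theorem measurable_rpow_mul_exp_neg_sq_div (y : ℝ) :
    Measurable fun p : ℝ => p ^ (-(1 / 2 : ℝ)) * rexp (-(|y| ^ 2) / (4 * p)) :=
  (measurable_id.pow_const _).mul (by fun_prop)

theorem integrableOn_rpow_mul_exp_neg_sq_div_mul {φ : ℝ → ℝ} {C β y : ℝ} (hφ : Measurable φ)
    (hβ : 1 / 2 < β) (hC : ∀ p, 0 < p → |φ p| ≤ C * p ^ (-β)) (hy : y ≠ 0) :
    IntegrableOn (fun p => p ^ (-(1 / 2 : ℝ)) * rexp (-(|y| ^ 2) / (4 * p)) * φ p) (Ioi 0) := by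
  refine ((integrableOn_rpow_mul_exp_neg_div (a := -(1 / 2) - β) (b := y ^ 2 / 4) (by linarith)
    (by positivity)).const_mul C).mono'
      ((measurable_rpow_mul_exp_neg_sq_div y).mul hφ).aestronglyMeasurable ?_
  filter_upwards [ae_restrict_mem measurableSet_Ioi] with p (hp : 0 < p)
  have hexp : -|y| ^ 2 / (4 * p) = -(y ^ 2 / 4 / p) := by rw [sq_abs]; field_simp
  calc ‖p ^ (-(1 / 2 : ℝ)) * rexp (-|y| ^ 2 / (4 * p)) * φ p‖
      = p ^ (-(1 / 2 : ℝ)) * rexp (-(y ^ 2 / 4 / p)) * |φ p| := by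
        rw [norm_mul, Real.norm_of_nonneg (by positivity), hexp, Real.norm_eq_abs]
    _ ≤ p ^ (-(1 / 2 : ℝ)) * rexp (-(y ^ 2 / 4 / p)) * (C * p ^ (-β)) := by
        gcongr
        exact hC p hp
    _ = C * (p ^ (-(1 / 2) - β) * rexp (-(y ^ 2 / 4 / p))) := by
        rw [sub_eq_add_neg, Real.rpow_add hp]
        ring

theorem abs_sign_le_one (y : ℝ) : |(SignType.sign y : ℝ)| ≤ 1 := by
  rcases lt_trichotomy y 0 with hy | rfl | hy <;> simp [*]

theorem abs_mem_Icc_of_mem_ball {y z : ℝ} (hz : z ∈ Metric.ball y (|y| / 2)) :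
    |z| ∈ Icc |y / 2| (4 * |y / 2|) := by
  rw [Metric.mem_ball, Real.dist_eq] at hz
  have hlower := abs_sub_abs_le_abs_sub y z
  have hupper := abs_sub_abs_le_abs_sub z y
  rw [abs_sub_comm] at hlower
  rw [abs_div, abs_two]
  constructor <;> linarith

theorem hasDerivAt_integral_rpow_mul_exp_neg_sq_div_mul {φ : ℝ → ℝ} {C β y : ℝ}
    (hφ : Measurable φ) (hβ : 1 / 2 < β) (hC : ∀ p, 0 < p → |φ p| ≤ C * p ^ (-β)) (hy : y ≠ 0) :
    HasDerivAt
      (fun y => ∫ p in Ioi 0, p ^ (-(1 / 2 : ℝ)) * rexp (-(|y| ^ 2) / (4 * p)) * φ p)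
      (∫ p in Ioi 0, -(√π * SignType.sign y * levyDensity y p) * φ p) y := by
  have hint : IntegrableOn (fun p => 4 * √π * C * (levyDensity (y / 2) p * p ^ (-β))) (Ioi 0) :=
    (integrableOn_levyDensity_mul_rpow (div_ne_zero hy two_ne_zero) (by linarith)).const_mul _
  refine (_root_.hasDerivAt_integral_of_dominated_loc_of_deriv_le
    (F' := fun y p => -(√π * SignType.sign y * levyDensity y p) * φ p)
    (Metric.ball_mem_nhds y (half_pos (abs_pos.mpr hy))) (Eventually.of_forall fun z =>
      ((measurable_rpow_mul_exp_neg_sq_div z).mul hφ).aestronglyMeasurable)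
    (integrableOn_rpow_mul_exp_neg_sq_div_mul hφ hβ hC hy)
    (((measurable_levyDensity y).const_mul _).neg.mul hφ).aestronglyMeasurable ?_ hint ?_).2
  · filter_upwards [ae_restrict_mem measurableSet_Ioi] with p (hp : 0 < p) z hz
    obtain ⟨hyz, hzy⟩ := abs_mem_Icc_of_mem_ball hz
    have hlevy := levyDensity_nonneg (y / 2) hp.le
    calc ‖-(√π * SignType.sign z * levyDensity z p) * φ p‖
        = √π * |(SignType.sign z : ℝ)| * levyDensity z p * |φ p| := by
          rw [norm_mul, norm_neg, norm_mul, norm_mul, Real.norm_of_nonneg (Real.sqrt_nonneg π),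
            Real.norm_of_nonneg (levyDensity_nonneg z hp.le), Real.norm_eq_abs, Real.norm_eq_abs]
      _ ≤ √π * 1 * (4 * levyDensity (y / 2) p) * (C * p ^ (-β)) := by
          gcongr
          exacts [levyDensity_nonneg z hp.le, abs_sign_le_one z, levyDensity_le_mul hp.le hyz hzy,
            hC p hp]
      _ = 4 * √π * C * (levyDensity (y / 2) p * p ^ (-β)) := by ring
  · filter_upwards [ae_restrict_mem measurableSet_Ioi] with p hp z _
    exact (hasDerivAt_rpow_mul_exp_neg_sq_div hp z).mul_const _

theorem four_mul_pi_rpow_mul_sqrt_pi : (4 * π) ^ (-(1 / 2 : ℝ)) * √π = 1 / 2 := by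
  have hsqrt : √4 = 2 := by rw [show (4 : ℝ) = 2 ^ 2 by norm_num, Real.sqrt_sq two_pos.le]
  rw [Real.rpow_neg (by positivity), ← Real.sqrt_eq_rpow, Real.sqrt_mul (by norm_num), hsqrt]
  field_simp

theorem integral_integral_levyDensity_mul {f : ℝ → ℝ → ℝ} {C β y : ℝ} (hβ : -(1 / 2) < β)
    (hf : Measurable (Function.uncurry f))
    (hC : ∀ p s, 0 < p → 0 < s → |f p s| ≤ C * p ^ (-β)) (hy : y ≠ 0) (δ : ℝ) :
    ∫ s in Ioo 0 δ, ∫ p in Ioi 0, levyDensity y p * f p s =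
      ∫ p in Ioi 0, levyDensity y p * ∫ s in Ioo 0 δ, f p s := by
  have hmeas : Measurable (Function.uncurry fun s p => levyDensity y p * f p s) :=
    ((measurable_levyDensity y).comp measurable_snd).mul (hf.comp measurable_swap)
  have hdom : Integrable (fun z : ℝ × ℝ => 1 * (C * (levyDensity y z.2 * z.2 ^ (-β))))
      ((volume.restrict (Ioo 0 δ)).prod (volume.restrict (Ioi 0))) :=
    (integrable_const 1).mul_prod ((integrableOn_levyDensity_mul_rpow hy hβ).const_mul C)
  have hint : Integrable (Function.uncurry fun s p => levyDensity y p * f p s)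
      ((volume.restrict (Ioo 0 δ)).prod (volume.restrict (Ioi 0))) := by
    refine hdom.mono' hmeas.aestronglyMeasurable ?_
    rw [Measure.prod_restrict]
    filter_upwards [ae_restrict_mem (measurableSet_Ioo.prod measurableSet_Ioi)]
      with ⟨s, p⟩ ⟨hs, (hp : 0 < p)⟩
    have hlevy := levyDensity_nonneg y hp.le
    calc ‖levyDensity y p * f p s‖ = levyDensity y p * |f p s| := by
          rw [norm_mul, Real.norm_of_nonneg hlevy, Real.norm_eq_abs]
      _ ≤ levyDensity y p * (C * p ^ (-β)) := by gcongr; exact hC p s hp hs.1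
      _ = 1 * (C * (levyDensity y p * p ^ (-β))) := by ring
  rw [integral_integral_swap hint]
  simp only [MeasureTheory.integral_const_mul]

namespace IsConcentratingFamily

variable {f : ℝ → ℝ → ℝ}

theorem exists_abs_integral_Ioo_le (hf : IsConcentratingFamily f) (δ : ℝ) :
    ∃ C, ∀ p, 0 < p → |∫ s in Ioo 0 δ, f p s| ≤ C := by
  obtain ⟨C, hC⟩ := hf.exists_integral_abs_le
  refine ⟨C, fun p hp => abs_integral_le_integral_abs.trans (le_trans ?_ (hC p hp))⟩
  exact setIntegral_mono_set (hf.integrableOn p hp).abs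
    (Eventually.of_forall fun s => abs_nonneg _) (Eventually.of_forall Ioo_subset_Ioi_self)

theorem tendsto_integral_Ioo (hf : IsConcentratingFamily f) {δ : ℝ} (hδ : 0 < δ) :
    Tendsto (fun p => ∫ s in Ioo 0 δ, f p s) (𝓝[>] 0) (𝓝 1) := by
  have htail : Tendsto (fun p => 1 - ∫ s in Ioi δ, f p s) (𝓝[>] 0) (𝓝 1) := by
    have hzero : Tendsto (fun p => ∫ s in Ioi δ, f p s) (𝓝[>] 0) (𝓝 0) :=
      squeeze_zero_norm (fun _ => abs_integral_le_integral_abs) (hf.tendsto_tail δ hδ)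
    simpa using hzero.const_sub 1
  refine htail.congr' ?_
  filter_upwards [self_mem_nhdsWithin] with p hp
  have hint := hf.integrableOn p hp
  rw [sub_eq_iff_eq_add, ← hf.integral_eq_one p hp, ← integral_Ioc_eq_integral_Ioo,
    ← setIntegral_union (Ioc_disjoint_Ioi le_rfl) measurableSet_Ioi
      (hint.mono_set Ioc_subset_Ioi_self) (hint.mono_set (Ioi_subset_Ioi hδ.le)),
    Ioc_union_Ioi_eq_Ioi hδ.le]

theorem hasDerivAt_heatSubordination (hf : IsConcentratingFamily f) {y s : ℝ} (hy : y ≠ 0)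
    (hs : 0 < s) :
    HasDerivAt (fun y => heatSubordination f y s)
      (-(1 / 2) * SignType.sign y * ∫ p in Ioi 0, levyDensity y p * f p s) y := by
  obtain ⟨C, β, hβ, hC⟩ := hf.exists_abs_le
  have hfs : Measurable fun p => f p s := hf.measurable.comp measurable_prodMk_right
  refine ((hasDerivAt_integral_rpow_mul_exp_neg_sq_div_mul hfs hβ (fun p hp => hC p s hp hs)
    hy).const_mul ((4 * π) ^ (-(1 / 2 : ℝ)))).congr_deriv ?_
  simp only [← neg_mul, mul_assoc (_ * _ : ℝ), MeasureTheory.integral_const_mul]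
  linear_combination -(SignType.sign y * ∫ p in Ioi 0, levyDensity y p * f p s) *
    four_mul_pi_rpow_mul_sqrt_pi

theorem integral_deriv_heatSubordination (hf : IsConcentratingFamily f) {y t δ : ℝ} (hy : y ≠ 0)
    (hδ : 0 ≤ δ) :
    ∫ τ in (t - δ)..t, deriv (fun z => heatSubordination f z (t - τ)) y =
      -(1 / 2) * SignType.sign y * ∫ p in Ioi 0, levyDensity y p * ∫ s in Ioo 0 δ, f p s := by
  obtain ⟨C, β, hβ, hC⟩ := hf.exists_abs_le
  rw [intervalIntegral.integral_comp_sub_left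
      (fun s => deriv (fun z => heatSubordination f z s) y) t, sub_self, sub_sub_cancel,
    intervalIntegral.integral_of_le hδ, integral_Ioc_eq_integral_Ioo,
    setIntegral_congr_fun measurableSet_Ioo
      fun s hs => (hf.hasDerivAt_heatSubordination hy hs.1).deriv,
    MeasureTheory.integral_const_mul,
    integral_integral_levyDensity_mul (by linarith) hf.measurable hC hy]

theorem tendsto_integral_levyDensity_mul_integral (hf : IsConcentratingFamily f) (a : ℝ) {δ : ℝ}
    (hδ : 0 < δ) :
    Tendsto (fun x => ∫ p in Ioi 0, levyDensity (x - a) p * ∫ s in Ioo 0 δ, f p s)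
      (𝓝[≠] a) (𝓝 1) := by
  obtain ⟨C, hC⟩ := hf.exists_abs_integral_Ioo_le δ
  have hsub : Tendsto (fun x => x - a) (𝓝[≠] a) (𝓝[≠] 0) := by
    refine tendsto_nhdsWithin_iff.mpr ⟨(Continuous.tendsto' (by fun_prop) a 0
      (by simp)).mono_left nhdsWithin_le_nhds, ?_⟩
    filter_upwards [self_mem_nhdsWithin] with x hx
    exact sub_ne_zero.mpr hx
  exact (tendsto_integral_levyDensity_mul
    hf.measurable.stronglyMeasurable.integral_prod_right.measurable hC
    (hf.tendsto_integral_Ioo hδ)).comp hsub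

end IsConcentratingFamily

theorem truncated_layer_limits_general {f : ℝ → ℝ → ℝ} (hf : IsConcentratingFamily f) (a t : ℝ)
    {δ : ℝ} (hδ : 0 < δ) :
    Tendsto (fun x => ∫ τ in (t - δ)..t, deriv (fun y => heatSubordination f y (t - τ)) (x - a))
      (𝓝[<] a) (𝓝 (1 / 2)) ∧
    Tendsto (fun x => ∫ τ in (t - δ)..t, deriv (fun y => heatSubordination f y (t - τ)) (x - a))
      (𝓝[>] a) (𝓝 (-(1 / 2))) := by
  have hlim := hf.tendsto_integral_levyDensity_mul_integral a hδ
  constructor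
  · have hleft := (hlim.mono_left (nhdsLT_le_nhdsNE a)).const_mul (1 / 2)
    rw [mul_one] at hleft
    refine hleft.congr' ?_
    filter_upwards [self_mem_nhdsWithin] with x hx
    have hxa : x - a < 0 := sub_neg.mpr hx
    rw [hf.integral_deriv_heatSubordination hxa.ne hδ.le, sign_neg hxa, SignType.coe_neg_one,
      neg_mul_neg, mul_one]
  · have hright := (hlim.mono_left (nhdsGT_le_nhdsNE a)).const_mul (-(1 / 2))
    rw [mul_one] at hright
    refine hright.congr' ?_
    filter_upwards [self_mem_nhdsWithin] with x hx
    have hxa : 0 < x - a := sub_pos.mpr hx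
    rw [hf.integral_deriv_heatSubordination hxa.ne' hδ.le, sign_pos hxa, SignType.coe_one, mul_one]

/-- One-sided limits of the truncated single-layer integral of `E_x`:
as `x → a⁻` the integral `∫_{t-δ}^t E_x(x-a, t-τ) dτ` tends to `1/2`, and as
`x → a⁺` it tends to `-1/2`. -/
theorem truncated_layer_limits
    (m : ℕ) (α lam : Fin (m + 1) → ℝ)
    (hmono : StrictMono α) (hpos : ∀ j, 0 < α j) (hlt1 : ∀ j, α j < 1)
    (hlam : ∀ j, 0 < lam j)
    (a t δ : ℝ) (ht : 0 < t) (hδ : δ ∈ Set.Ioo 0 t) :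
    Tendsto (fun x => ∫ τ in (t - δ)..t, kerEx m α lam (x - a) (t - τ))
      (𝓝[<] a) (𝓝 (1/2)) ∧
    Tendsto (fun x => ∫ τ in (t - δ)..t, kerEx m α lam (x - a) (t - τ))
      (𝓝[>] a) (𝓝 (-(1/2))) := by
  simp only [kerEx, kerE_eq_heatSubordination]
  exact truncated_layer_limits_general
    (isConcentratingFamily_Sconv (fun j => ⟨hpos j, hlt1 j⟩) hlam) a t hδ.1
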